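/- arXiv:1403.3866 — 6 statements merged into one kernel-verified Lean document; each statement's English description precedes it below -/
import Mathlib

section
/- The characteristic polynomial of T is det(λ·Id − T) = λ^n + σ_2·λ^{n−2} + σ_4·λ^{n−4} + ⋯ + σ_{2k}·λ^{n−2k} + ⋯, i.e. det(λ·Id − T) = Σ_{k=0}^{⌊n/2⌋} σ_{2k}·λ^{n−2k}, where σ_0 = 1; in particular no odd elementary symmetric polynomial occurs as a coefficient. -/
open MvPolynomial

/-- The `n × n` matrix `T` over `ℂ[x_1, …, x_n]` with `T i i = 0`,
`T i j = x_j` for `i < j` and `T i j = -x_j` for `i > j`. -/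
noncomputable def Tmat (n : ℕ) : Matrix (Fin n) (Fin n) (MvPolynomial (Fin n) ℂ) :=
  fun i j => if i = j then 0 else if i < j then X j else -X j

/-- The determinant of a rank-one perturbation `M + t • (1 ⬝ vᵀ)` is an affine function of `t`;
here this is expressed by its values at `1`, `0` and `-1`. -/
theorem Matrix.det_add_row_add_det_sub_row {m A : Type*} [Fintype m] [DecidableEq m] [CommRing A]
    [Nonempty m] (M : Matrix m m A) (v : m → A) :
    (Matrix.of fun i j => M i j + v j).det + (Matrix.of fun i j => M i j - v j).det
      = 2 * M.det := by
  obtain ⟨k⟩ := ‹Nonempty m›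
  let N : Matrix m m A := Matrix.of fun i j => M i j - M k j
  have key : ∀ t : A, (Matrix.of fun i j => M i j + t * v j).det
      = (N.updateRow k (M k)).det + t * (N.updateRow k v).det := by
    intro t
    rw [← Matrix.det_updateRow_smul, ← Matrix.det_updateRow_add]
    refine Matrix.det_eq_of_forall_row_eq_smul_add_const (fun i => if i = k then 0 else 1) k
      (by simp) fun i j => ?_
    by_cases h : i = k
    · subst h; simp
    · simp only [Matrix.of_apply, Matrix.updateRow_ne h, Matrix.updateRow_self, if_neg h,
        Pi.add_apply, Pi.smul_apply, smul_eq_mul, N]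
      ring
  have h₁ := key 1
  have h₀ := key 0
  have h₂ := key (-1)
  simp only [one_mul, zero_mul, add_zero, neg_mul, ← sub_eq_add_neg] at h₁ h₀ h₂
  rw [h₁, h₂, show M.det = _ from h₀]
  ring

theorem two_mul_charpoly_Tmat (n : ℕ) (hn : 1 ≤ n) :
    2 * (Tmat n).charpoly =
      ∏ i : Fin n, (Polynomial.X + Polynomial.C (X i : MvPolynomial (Fin n) ℂ)) +
        ∏ i : Fin n, (Polynomial.X - Polynomial.C (X i : MvPolynomial (Fin n) ℂ)) := by
  have : Nonempty (Fin n) := ⟨⟨0, hn⟩⟩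
  rw [Matrix.charpoly, ← Matrix.det_add_row_add_det_sub_row _
    fun j => Polynomial.C (X j : MvPolynomial (Fin n) ℂ)]
  congr 1
  · rw [Matrix.det_of_isLowerTriangular]
    · simp [Tmat, Matrix.charmatrix_apply]
    · intro i j (hij : i < j)
      simp [Tmat, Matrix.charmatrix_apply, hij, hij.ne]
  · rw [Matrix.det_of_isUpperTriangular]
    · simp [Tmat, Matrix.charmatrix_apply]
    · intro i j (hij : j < i)
      simp [Tmat, Matrix.charmatrix_apply, hij.not_gt, hij.ne']

theorem Finset.sum_range_add_neg_one_pow_mul {A : Type*} [CommRing A] (n : ℕ) (f : ℕ → A) :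
    ∑ j ∈ Finset.range (n + 1), f j + ∑ j ∈ Finset.range (n + 1), (-1) ^ j * f j
      = 2 * ∑ k ∈ Finset.range (n / 2 + 1), f (2 * k) := by
  have hcancel : ∀ j, f j + (-1) ^ j * f j = if Even j then 2 * f j else 0 := by
    intro j
    split_ifs with h
    · rw [h.neg_one_pow]; ring
    · rw [(Nat.not_even_iff_odd.mp h).neg_one_pow]; ring
  rw [← Finset.sum_add_distrib, Finset.sum_congr rfl fun j _ => hcancel j, ← Finset.sum_filter,
    Finset.mul_sum]
  refine Finset.sum_nbij' (fun j => j / 2) (fun k => 2 * k) ?_ ?_ ?_ ?_ ?_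
  · intro j hj
    simp only [Finset.mem_filter, Finset.mem_range] at hj ⊢
    omega
  · intro k hk
    simp only [Finset.mem_filter, Finset.mem_range] at hk ⊢
    exact ⟨by omega, even_two_mul k⟩
  · intro j hj
    exact Nat.two_mul_div_two_of_even (Finset.mem_filter.mp hj).2
  · intro k _
    simp
  · intro j hj
    rw [Nat.two_mul_div_two_of_even (Finset.mem_filter.mp hj).2]

/-- The characteristic polynomial of `T` is
`λ^n + σ_2 λ^{n-2} + σ_4 λ^{n-4} + ⋯`, where `σ_r` is the `r`-th elementary
symmetric polynomial in `x_1, …, x_n` (and `σ_0 = 1`). -/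
theorem charpoly_Tmat (n : ℕ) (hn : 1 ≤ n) :
    (Tmat n).charpoly =
      ∑ k ∈ Finset.range (n / 2 + 1),
        Polynomial.C (esymm (Fin n) ℂ (2 * k)) * Polynomial.X ^ (n - 2 * k) := by
  have hadd := MvPolynomial.prod_C_add_X_eq_sum_esymm ℂ (Fin n)
  have hsub := Multiset.prod_X_sub_X_eq_sum_esymm
    (Finset.univ.val.map fun i : Fin n => (X i : MvPolynomial (Fin n) ℂ))
  rw [Multiset.map_map] at hsub
  simp only [Multiset.card_map, Finset.card_val, Finset.card_univ, Fintype.card_fin,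
    ← MvPolynomial.esymm_eq_multiset_esymm] at hadd hsub
  refine mul_left_cancel₀ (two_ne_zero (α := Polynomial (MvPolynomial (Fin n) ℂ))) ?_
  rw [two_mul_charpoly_Tmat n hn, hadd]
  refine Eq.trans (congrArg _ hsub) ?_
  exact Finset.sum_range_add_neg_one_pow_mul n
    fun j => Polynomial.C (esymm (Fin n) ℂ j) * Polynomial.X ^ (n - j)
end

section
/- The determinant of T equals x_1·x_2·⋯·x_n if n is even, and equals 0 if n is odd. -/
open MvPolynomial

/-- The skew-symmetric `n × n` matrix with all entries above the diagonal equal to `1`. -/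
def skewOnes (R : Type*) [CommRing R] (n : ℕ) : Matrix (Fin n) (Fin n) R :=
  Matrix.of fun i j => if i = j then 0 else if i < j then 1 else -1

theorem skewOnes_two_mul (R : Type*) [CommRing R] :
    skewOnes R 2 * !![0, -1; 1, 0] = 1 := by
  ext i j
  fin_cases i <;> fin_cases j <;> simp [skewOnes, Matrix.mul_apply, Fin.sum_univ_two]

theorem reindex_skewOnes_two_add (R : Type*) [CommRing R] (n : ℕ) :
    Matrix.reindex finSumFinEquiv.symm finSumFinEquiv.symm (skewOnes R (2 + n)) =
      Matrix.fromBlocks (skewOnes R 2) (Matrix.of fun _ _ => 1) (Matrix.of fun _ _ => -1)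
        (skewOnes R n) := by
  ext (i | i) (j | j) <;>
    simp [skewOnes, Fin.ext_iff, Fin.lt_def, -Fin.val_fin_lt] <;> grind

theorem det_skewOnes_two_add (R : Type*) [CommRing R] (n : ℕ) :
    (skewOnes R (2 + n)).det = (skewOnes R n).det := by
  let _ : Invertible (skewOnes R 2) := 
    ⟨_, mul_eq_one_comm.mp (skewOnes_two_mul R), skewOnes_two_mul R⟩
  have hinv : ⅟(skewOnes R 2) = !![0, -1; 1, 0] := rfl
  have hschur : (Matrix.of fun (_ : Fin n) (_ : Fin 2) => (-1 : R)) * ⅟(skewOnes R 2) *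
      (Matrix.of fun (_ : Fin 2) (_ : Fin n) => (1 : R)) = 0 := by
    ext i j
    simp [hinv, Matrix.mul_apply, Fin.sum_univ_two]
  have hdet : (skewOnes R 2).det = 1 := by simp [skewOnes, Matrix.det_fin_two]
  rw [← Matrix.det_reindex_self finSumFinEquiv.symm, reindex_skewOnes_two_add,
    Matrix.det_fromBlocks₁₁, hschur, hdet, sub_zero, one_mul]

theorem det_skewOnes (R : Type*) [CommRing R] (n : ℕ) :
    (skewOnes R n).det = if Even n then 1 else 0 := by
  induction n using Nat.twoStepInduction with
  | zero => simp
  | one => simp [skewOnes]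
  | more n ih _ => rw [add_comm, det_skewOnes_two_add, ih]; simp [Nat.even_add]

theorem Tmat_eq_of_mul_skewOnes (n : ℕ) :
    Tmat n = Matrix.of fun i j => X j * skewOnes (MvPolynomial (Fin n) ℂ) n i j := by
  ext1 i j
  simp [Tmat, skewOnes]

/-- `det T = x_1 ⋯ x_n` if `n` is even, and `det T = 0` if `n` is odd. -/
theorem det_Tmat (n : ℕ) (hn : 1 ≤ n) :
    (Tmat n).det = if Even n then ∏ i : Fin n, X i else 0 := by
  rw [Tmat_eq_of_mul_skewOnes, Matrix.det_mul_row, det_skewOnes, mul_ite, mul_one, mul_zero]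
end

section
/- Let v = (1, 1, …, 1) ∈ R^n. Then the n vectors v, T·v, T^2·v, …, T^{n−1}·v in the free module R^n are linearly independent over R. (This is the matrix form of the statement that the odd elements φ_0, …, φ_{n−1} of the Clifford algebra U(𝔥), where φ_0 = ξ_1 + ⋯ + ξ_n and φ_k = T^k(φ_0), are linearly independent over U(𝔥_{0̄}) = ℂ[x_1, …, x_n].) -/
open MvPolynomial

open Matrix

/-- The sign matrix obtained from `Tmat n` by specializing every variable to `1`. -/
def signMatrix (n : ℕ) : Matrix (Fin n) (Fin n) ℂ :=
  fun i j => if i = j then 0 else if i < j then 1 else -1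

theorem Tmat_map_eval_one (n : ℕ) :
    (eval (fun _ => (1 : ℂ))).mapMatrix (Tmat n) = signMatrix n := by
  ext i j
  simp only [RingHom.mapMatrix_apply, Matrix.map_apply, Tmat, signMatrix]
  split_ifs <;> simp

theorem sum_pow_mul_sign_mul_sub_one (z : ℂ) (j n : ℕ) (h : j + 1 ≤ n) :
    (∑ i ∈ Finset.range n, z ^ i * (if i = j then 0 else if i < j then 1 else -1)) * (z - 1)
      = (1 + z) * z ^ j - 1 - z ^ n := by
  induction n, h using Nat.le_induction with
  | base =>
    have hlt : ∑ i ∈ Finset.range j,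
        z ^ i * (if i = j then 0 else if i < j then 1 else -1) = ∑ i ∈ Finset.range j, z ^ i := by
      refine Finset.sum_congr rfl fun i hi => ?_
      have := Finset.mem_range.mp hi
      simp [this, this.ne]
    rw [Finset.sum_range_succ, hlt, add_mul, geom_sum_mul]
    simp
    ring
  | succ n h ih =>
    rw [Finset.sum_range_succ, add_mul, ih, if_neg (by lia), if_neg (by lia)]
    ring

/-- If `z ^ n = -1`, then `(1, z, …, z ^ (n - 1))` is a left eigenvector of the sign matrix. -/
theorem vecMul_signMatrix {n : ℕ} {z : ℂ} (hz : z ^ n = -1) (hz1 : z ≠ 1) :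
    (fun i : Fin n => z ^ (i : ℕ)) ᵥ* signMatrix n
      = ((1 + z) / (z - 1)) • fun i : Fin n => z ^ (i : ℕ) := by
  have hz' : z - 1 ≠ 0 := sub_ne_zero.mpr hz1
  ext j
  have key := sum_pow_mul_sign_mul_sub_one z j n j.isLt
  rw [hz, ← Fin.sum_univ_eq_sum_range
    (fun i => z ^ i * (if i = (j : ℕ) then 0 else if i < j then 1 else -1))] at key
  simp only [vecMul, dotProduct, signMatrix, Fin.ext_iff, Fin.lt_def, Pi.smul_apply, smul_eq_mul]
  rw [div_mul_eq_mul_div, eq_div_iff hz', key]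
  ring

theorem dotProduct_pow_mulVec_of_vecMul_eq_smul {R ι : Type*} [CommRing R] [Fintype ι]
    [DecidableEq ι] {A : Matrix ι ι R} {u : ι → R} {c : R} (h : u ᵥ* A = c • u) (v : ι → R)
    (k : ℕ) : u ⬝ᵥ (A ^ k *ᵥ v) = c ^ k * (u ⬝ᵥ v) := by
  induction k with
  | zero => simp
  | succ k ih =>
    rw [pow_succ', ← mulVec_mulVec, dotProduct_mulVec, h, smul_dotProduct, ih, smul_eq_mul,
      pow_succ']
    ring

theorem one_add_div_sub_one_injOn :
    Set.InjOn (fun z : ℂ => (1 + z) / (z - 1)) {1}ᶜ := by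
  intro a ha b hb hab
  have ha' : a - 1 ≠ 0 := sub_ne_zero.mpr ha
  have hb' : b - 1 ≠ 0 := sub_ne_zero.mpr hb
  simp only [div_eq_div_iff ha' hb'] at hab
  linear_combination (-1 / 2) * hab

theorem exists_injective_pow_eq_neg_one {n : ℕ} (hn : n ≠ 0) :
    ∃ z : Fin n → ℂ, Function.Injective z ∧ ∀ m, z m ^ n = -1 := by
  have hη := Complex.isPrimitiveRoot_exp (2 * n) (by lia)
  set η := Complex.exp (2 * Real.pi * Complex.I / (2 * n : ℕ))
  have hηn : η ^ n = -1 := by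
    have hsq : (η ^ n) ^ 2 = 1 := by rw [← pow_mul, mul_comm, hη.pow_eq_one]
    exact (eq_or_eq_neg_of_sq_eq_sq _ 1 (by rw [hsq, one_pow])).resolve_left
      (hη.pow_ne_one_of_pos_of_lt hn (by lia))
  refine ⟨fun m => η ^ (2 * (m : ℕ) + 1), fun a b hab => ?_, fun m => ?_⟩
  · have := hη.pow_inj (by lia) (by lia) hab
    exact Fin.ext (by lia)
  · rw [← pow_mul, mul_comm, pow_mul, hηn, pow_succ, pow_mul]
    simp

theorem det_signMatrix_krylov_ne_zero {n : ℕ} (hn : n ≠ 0) :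
    (of fun k : Fin n => signMatrix n ^ (k : ℕ) *ᵥ fun _ => (1 : ℂ)).det ≠ 0 := by
  obtain ⟨z, hinj, hz⟩ := exists_injective_pow_eq_neg_one hn
  have hz1 : ∀ m, z m ≠ 1 := fun m h => by
    have := hz m
    rw [h, one_pow] at this
    norm_num at this
  set c : Fin n → ℂ := fun m => (fun i : Fin n => z m ^ (i : ℕ)) ⬝ᵥ fun _ => 1
  have hc : ∀ m, c m ≠ 0 := fun m h => by
    have hg := geom_sum_mul (z m) n
    rw [hz, ← Fin.sum_univ_eq_sum_range (fun i => z m ^ i)] at hg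
    simp only [c, dotProduct, mul_one] at h
    rw [h] at hg
    norm_num at hg
  have hprod : (of fun k : Fin n => signMatrix n ^ (k : ℕ) *ᵥ fun _ => (1 : ℂ)) * (vandermonde z)ᵀ
      = (vandermonde fun m => (1 + z m) / (z m - 1))ᵀ * diagonal c := by
    ext k m
    rw [mul_diagonal, transpose_apply, vandermonde_apply,
      ← dotProduct_pow_mulVec_of_vecMul_eq_smul (vecMul_signMatrix (hz m) (hz1 m)), dotProduct_comm]
    rfl
  have hlam : Function.Injective fun m => (1 + z m) / (z m - 1) := fun a b hab =>
    hinj (one_add_div_sub_one_injOn (hz1 a) (hz1 b) hab)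
  refine left_ne_zero_of_mul (b := (vandermonde z)ᵀ.det) ?_
  rw [← det_mul, hprod, det_mul, det_transpose, det_diagonal]
  exact mul_ne_zero (det_vandermonde_ne_zero_iff.mpr hlam)
    (Finset.prod_ne_zero_iff.mpr fun m _ => hc m)

/-- The `n` vectors `v, Tv, T²v, …, T^{n-1}v` of the free module `R^n`, where
`v = (1, …, 1)` and `R = ℂ[x_1, …, x_n]`, are linearly independent over `R`. -/
theorem linearIndependent_Tmat_pow_ones (n : ℕ) (hn : 1 ≤ n) :
    LinearIndependent (MvPolynomial (Fin n) ℂ)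
      (fun k : Fin n =>
        ((Tmat n) ^ (k : ℕ)).mulVec (fun _ => (1 : MvPolynomial (Fin n) ℂ))) := by
  refine linearIndependent_rows_of_det_ne_zero
    (A := of fun k : Fin n => Tmat n ^ (k : ℕ) *ᵥ fun _ => 1) fun h => ?_
  refine det_signMatrix_krylov_ne_zero (n := n) (by lia) ?_
  rw [← map_zero (eval fun _ : Fin n => (1 : ℂ)), ← h, RingHom.map_det]
  congr 1
  ext k i
  simp only [RingHom.mapMatrix_apply, Matrix.map_apply, of_apply, RingHom.map_mulVec]
  rw [← Tmat_map_eval_one, ← map_pow]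
  congr 1
  ext
  simp
end

section
/- The algebra C satisfies the standard polynomial identity of degree N = 2^{⌊n/2⌋ + 1}: for any elements u_1, …, u_N ∈ C one has Σ_{σ ∈ S_N} sgn(σ)·u_{σ(1)}·u_{σ(2)}·⋯·u_{σ(N)} = 0. (This is the Amitsur–Levitzki identity for the enveloping algebra U(𝔥) of the Cartan subalgebra 𝔥 of the queer Lie superalgebra Q(n), with k = n/2 for even n and k = (n−1)/2 for odd n.) -/
open MvPolynomial

/-- The quadratic form `Q(v) = Σ_i x_i v_i²` on the free module `R^n`, where
`R = ℂ[x_1, …, x_n]`. -/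
noncomputable def Qform (n : ℕ) :
    QuadraticForm (MvPolynomial (Fin n) ℂ) (Fin n → MvPolynomial (Fin n) ℂ) :=
  QuadraticMap.weightedSumSquares (MvPolynomial (Fin n) ℂ) (fun i => (X i : MvPolynomial (Fin n) ℂ))

open Polynomial in
/-- Jacobi's formula for the characteristic polynomial. -/
theorem Matrix.derivative_charpoly {ι R : Type*} [Fintype ι] [DecidableEq ι] [CommRing R]
    (B : Matrix ι ι R) : derivative B.charpoly = B.charmatrix.adjugate.trace := by
  have hdiag : ∀ i, B.charmatrix.adjugate.diag i =
      ∑ σ : Equiv.Perm ι, Equiv.Perm.sign σ • ((∏ j ∈ Finset.univ.erase i, B.charmatrix (σ j) j) *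
        derivative (B.charmatrix (σ i) i)) := by
    intro i
    rw [← diag_transpose, adjugate_transpose, diag_apply, adjugate_apply, updateRow_transpose,
      det_transpose, det_apply]
    refine Finset.sum_congr rfl fun σ _ => ?_
    rw [← Finset.prod_erase_mul _ _ (Finset.mem_univ i)]
    congr 2
    · refine Finset.prod_congr rfl fun j hj => ?_
      rw [updateCol_ne (Finset.ne_of_mem_erase hj)]
    · by_cases h : σ i = i <;> simp [h]
  rw [charpoly, det_apply, trace]
  simp_rw [hdiag]
  rw [Finset.sum_comm, derivative_sum]
  refine Finset.sum_congr rfl fun σ _ => ?_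
  rw [← Finset.smul_sum, ← derivative_prod_finset, Units.smul_def, Units.smul_def, derivative_smul]

open Polynomial in
/-- A matrix all of whose positive powers have trace zero is nilpotent. Writing `χ` for the
characteristic polynomial and `m` for its degree, the traces show that `X` times the derivative of
`χ` is `m χ`, whence `χ = X ^ m`. -/
theorem Matrix.pow_card_eq_zero_of_trace_pow_eq_zero {ι R : Type*} [Fintype ι] [DecidableEq ι]
    [CommRing R] [IsAddTorsionFree R] (B : Matrix ι ι R)
    (hB : ∀ k, 0 < k → (B ^ k).trace = 0) : B ^ Fintype.card ι = 0 := by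
  nontriviality R
  set m := Fintype.card ι
  set d := ∑ i, ∑ j, (B.charmatrix.adjugate i j).natDegree
  set K := d + 1
  have hgeom : B.charmatrix.adjugate *
        (scalar ι (Polynomial.X : R[X]) ^ (K + 1) - Polynomial.C.mapMatrix B ^ (K + 1)) =
      B.charpoly • ∑ i ∈ Finset.range (K + 1),
        scalar ι (Polynomial.X : R[X]) ^ i * Polynomial.C.mapMatrix B ^ (K - i) := by
    have hcomm : Commute (scalar ι (Polynomial.X : R[X])) (Polynomial.C.mapMatrix B) :=
      scalar_commute _ (fun r => Commute.all _ _) _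
    rw [← hcomm.mul_geom_sum₂, ← mul_assoc]
    change B.charmatrix.adjugate * B.charmatrix * _ = _
    rw [adjugate_mul, smul_mul_assoc, one_mul]
    rfl
  have htr := congrArg trace hgeom
  have hsum : (∑ i ∈ Finset.range (K + 1),
      scalar ι (Polynomial.X : R[X]) ^ i * Polynomial.C.mapMatrix B ^ (K - i)).trace =
        Polynomial.X ^ K * Polynomial.C (m : R) := by
    rw [trace_sum, Finset.sum_eq_single K]
    · rw [Nat.sub_self, pow_zero, mul_one, ← map_pow, scalar_apply, trace_diagonal]
      simp [m, mul_comm]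
    · intro i hi hiK
      have : 0 < K - i := by have := Finset.mem_range.mp hi; omega
      rw [← map_pow, ← map_pow, scalar_apply, ← smul_one_eq_diagonal, smul_mul_assoc, one_mul,
        trace_smul, RingHom.mapMatrix_apply, ← AddMonoidHom.map_trace, hB _ this]
      simp
    · simp
  rw [trace_smul, hsum, mul_sub, trace_sub, ← map_pow, ← map_pow, scalar_apply,
    ← smul_one_eq_diagonal, mul_smul_comm, mul_one, trace_smul, ← derivative_charpoly,
    smul_eq_mul, smul_eq_mul] at htr
  have hcoeff : ∀ k, k ≠ m → B.charpoly.coeff k = 0 := by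
    intro k hk
    have h1 := congrArg (fun p => Polynomial.coeff p (k + K)) htr
    have h2 : (B.charmatrix.adjugate *
        Polynomial.C.mapMatrix (B ^ (K + 1))).trace.coeff (k + K) = 0 := by
      simp only [trace, diag_apply, mul_apply, finsetSum_coeff, RingHom.mapMatrix_apply, map_apply,
        Polynomial.coeff_mul_C]
      refine Finset.sum_eq_zero fun i _ => Finset.sum_eq_zero fun j _ => ?_
      rw [Polynomial.coeff_eq_zero_of_natDegree_lt, zero_mul]
      have := Finset.single_le_sum (f := fun j => (B.charmatrix.adjugate i j).natDegree)
        (fun _ _ => Nat.zero_le _) (Finset.mem_univ j)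
      have := Finset.single_le_sum
        (f := fun i => ∑ j, (B.charmatrix.adjugate i j).natDegree)
        (fun _ _ => Nat.zero_le _) (Finset.mem_univ i)
      omega
    have h3 : (k : R) * B.charpoly.coeff k = m * B.charpoly.coeff k := by
      simp only [Polynomial.coeff_sub, h2, sub_zero] at h1
      rw [← mul_assoc, Polynomial.coeff_mul_C, Polynomial.coeff_mul_X_pow, mul_comm _ (m : R)] at h1
      rw [← h1]
      cases k with
      | zero => rw [Polynomial.coeff_X_pow_mul', if_neg (by omega)]; simp
      | succ k =>
        rw [show k + 1 + K = k + (K + 1) by ring, mul_comm (Polynomial.X ^ _),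
          Polynomial.coeff_mul_X_pow, Polynomial.coeff_derivative, mul_comm]
        push_cast; rfl
    have h4 : ((k : ℤ) - m) • B.charpoly.coeff k = 0 := by
      rw [sub_smul, natCast_zsmul, natCast_zsmul, nsmul_eq_mul, nsmul_eq_mul, h3, sub_self]
    exact (smul_eq_zero.mp h4).resolve_left (by omega)
  have hX : B.charpoly = Polynomial.X ^ m := by
    ext k
    rw [Polynomial.coeff_X_pow]
    split_ifs with h
    · have := B.charpoly_monic.coeff_natDegree
      rwa [charpoly_natDegree_eq_dim, show Fintype.card ι = k from h.symm] at this
    · exact hcoeff k h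
  simpa [hX] using B.aeval_self_charpoly

theorem ExteriorAlgebra.ι_mul_ι_mem_center {R M : Type*} [CommRing R] [AddCommGroup M] [Module R M]
    (x y : M) : ι R x * ι R y ∈ Subring.center (ExteriorAlgebra R M) := by
  have swap : ∀ a b : M, ι R a * ι R b = -(ι R b * ι R a) := fun a b =>
    eq_neg_of_add_eq_zero_left (ι_add_mul_swap a b)
  rw [Subring.mem_center_iff]
  intro g
  induction g using ExteriorAlgebra.induction with
  | algebraMap r => exact Algebra.commutes r _
  | ι z =>
    rw [← mul_assoc, swap z x, neg_mul, mul_assoc, swap z y, mul_neg, neg_neg, mul_assoc]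
  | mul a b ha hb => rw [mul_assoc, hb, ← mul_assoc, ha, mul_assoc]
  | add a b ha hb => rw [add_mul, mul_add, ha, hb]

theorem Matrix.trace_mul_eq_neg_of_anticommute {n A : Type*} [Fintype n] [Ring A]
    (M N : Matrix n n A) (h : ∀ i j, M i j * N j i = -(N j i * M i j)) :
    (M * N).trace = -(N * M).trace := by
  simp only [trace, diag_apply, mul_apply, h, Finset.sum_neg_distrib]
  rw [Finset.sum_comm]

theorem ExteriorAlgebra.isAddTorsionFree (R M : Type*) [CommRing R] [Algebra ℚ R] [AddCommGroup M]
    [Module R M] : IsAddTorsionFree (ExteriorAlgebra R M) :=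
  letI := Module.compHom (ExteriorAlgebra R M) (algebraMap ℚ R)
  IsAddTorsionFree.of_module_rat _

/-- A square matrix `A` with entries of degree one in an exterior algebra satisfies
`A ^ (2 * card n) = 0`: the entries of `A ^ 2` are central and its powers have trace zero. -/
theorem ExteriorAlgebra.matrix_map_ι_pow_eq_zero {n R M : Type*} [Fintype n] [DecidableEq n]
    [CommRing R] [Algebra ℚ R] [AddCommGroup M] [Module R M] (v : Matrix n n M) :
    v.map (ι R) ^ (2 * Fintype.card n) = 0 := by
  have := ExteriorAlgebra.isAddTorsionFree R M
  set A := v.map (ι R) with hA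
  let f := (Subring.center (ExteriorAlgebra R M)).subtype
  have hf : Function.Injective f := Subtype.val_injective
  have : IsAddTorsionFree (Subring.center (ExteriorAlgebra R M)) :=
    hf.isAddTorsionFree f.toAddMonoidHom
  let B : Matrix n n (Subring.center (ExteriorAlgebra R M)) := Matrix.of fun i j =>
    ⟨(A * A) i j, by
      rw [Matrix.mul_apply]
      exact Subring.sum_mem _ fun k _ => ι_mul_ι_mem_center _ _⟩
  have hB : f.mapMatrix B = A * A := rfl
  have htrace : ∀ k, 0 < k → (B ^ k).trace = 0 := by
    intro k hk
    obtain ⟨k, rfl⟩ := Nat.exists_eq_add_of_lt hk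
    rw [zero_add]
    set Z := f.mapMatrix (B ^ k) with hZ
    have hZA : Z = (A * A) ^ k := by rw [hZ, map_pow, hB]
    have hcomm : A * Z = Z * A := by
      rw [hZA]
      exact (((Commute.refl A).mul_right (Commute.refl A)).pow_right k).eq
    have hanti : ((Z * A) * A).trace = -(A * (Z * A)).trace := by
      refine Matrix.trace_mul_eq_neg_of_anticommute _ _ fun i j => ?_
      rw [Matrix.mul_apply, Finset.sum_mul, Finset.mul_sum, ← Finset.sum_neg_distrib]
      refine Finset.sum_congr rfl fun l _ => ?_
      have hz := Subring.mem_center_iff.mp ((B ^ k) i l).2 (A j i)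
      change A j i * Z i l = Z i l * A j i at hz
      rw [← mul_assoc, hz, mul_assoc, mul_assoc, ← mul_neg]
      congr 1
      exact eq_neg_of_add_eq_zero_left (ι_add_mul_swap _ _)
    rw [← mul_assoc, hcomm, mul_assoc] at hanti
    apply hf
    rw [map_zero, AddMonoidHom.map_trace f, pow_succ]
    change (f.mapMatrix (B ^ k * B)).trace = 0
    rw [map_mul, hB]
    exact self_eq_neg.mp hanti
  rw [pow_mul, sq, ← hB, ← map_pow, Matrix.pow_card_eq_zero_of_trace_pow_eq_zero B htrace,
    map_zero]

theorem Matrix.list_prod_ofFn_map_smul {n R A : Type*} [Fintype n] [DecidableEq n] [CommRing R]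
    [Ring A] [Algebra R A] {N : ℕ} (u : Fin N → Matrix n n R) (e : Fin N → A) :
    (List.ofFn fun i => (u i).map (· • e i)).prod =
      (List.ofFn u).prod.map (· • (List.ofFn e).prod) := by
  induction N with
  | zero =>
    ext i j
    by_cases h : i = j <;> simp [h]
  | succ N ih =>
    simp only [List.ofFn_succ, List.prod_cons, ih]
    ext i j
    simp [Matrix.mul_apply, Finset.sum_smul, smul_smul, mul_comm]

/-- The **Amitsur–Levitzki theorem** over commutative `ℚ`-algebras. -/
theorem Matrix.amitsur_levitzki {n R : Type*} [Fintype n] [DecidableEq n] [CommRing R]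
    [Algebra ℚ R] {N : ℕ} (hN : N = 2 * Fintype.card n) (u : Fin N → Matrix n n R) :
    ∑ σ : Equiv.Perm (Fin N), (Equiv.Perm.sign σ : ℤ) • (List.ofFn fun i => u (σ i)).prod = 0 := by
  let e : Fin N → Fin N → R := fun i => Pi.single i 1
  let v : Matrix n n (Fin N → R) := Matrix.of fun a b i => u i a b
  have hv : v.map (ExteriorAlgebra.ι R) =
      ∑ i, (u i).map (· • ExteriorAlgebra.ι R (e i)) := by
    ext a b
    rw [Matrix.sum_apply, Matrix.map_apply]
    simp only [Matrix.map_apply, ← map_smul, ← map_sum]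
    congr 1
    ext i
    simp [v, e, Finset.sum_apply, Pi.single_apply]
  have hpow := ExteriorAlgebra.matrix_map_ι_pow_eq_zero (R := R) v
  rw [← hN, hv, ← MultilinearMap.mkPiAlgebraFin_apply_const (R := R),
    MultilinearMap.map_sum] at hpow
  simp only [MultilinearMap.mkPiAlgebraFin_apply, Matrix.list_prod_ofFn_map_smul,
    ← ExteriorAlgebra.ιMulti_apply] at hpow
  let φ : ExteriorAlgebra R (Fin N → R) →ₗ[R] R :=
    ExteriorAlgebra.liftAlternating fun i =>
      if h : i = N then h ▸ Matrix.detRowAlternating else 0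
  have hφ : ∀ w : Fin N → Fin N → R, φ (ExteriorAlgebra.ιMulti R N w) = (Matrix.of w).det := by
    intro w
    simp only [φ, ExteriorAlgebra.liftAlternating_apply_ιMulti, dif_pos]
    rfl
  ext a b
  have hab := congrArg φ (congrFun (congrFun hpow a) b)
  simp only [Matrix.sum_apply, Matrix.map_apply, map_sum, map_smul, hφ, Matrix.zero_apply, map_zero,
    smul_eq_mul] at hab
  rw [Matrix.sum_apply, Matrix.zero_apply, ← hab]
  refine Finset.sum_of_injOn (fun σ : Equiv.Perm (Fin N) => ⇑σ) DFunLike.coe_injective.injOn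
    (fun _ _ => Finset.mem_coe.mpr (Finset.mem_univ _)) (fun f _ hf => ?_) (fun σ _ => ?_)
  · have hinj : ¬ Function.Injective f := fun hinj =>
      hf ⟨Equiv.ofBijective f (Finite.injective_iff_bijective.mp hinj), by simp, rfl⟩
    obtain ⟨i, j, hij, hne⟩ : ∃ i j, f i = f j ∧ i ≠ j := by
      simpa [Function.Injective] using hinj
    rw [Matrix.det_zero_of_row_eq hne (by ext; simp [hij]), mul_zero]
  · have hdet : (Matrix.of fun i => e (σ i)).det = ((Equiv.Perm.sign σ : ℤ) : R) := by
      rw [← Matrix.det_permutation]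
      congr 1
      ext i j
      simp [e, Pi.single_apply, PEquiv.toMatrix_apply, eq_comm]
    simp only [hdet, Matrix.smul_apply, zsmul_eq_mul, mul_comm]

theorem MultilinearMap.eq_zero_of_span_eq_top {ι R M N : Type*} [Finite ι] [CommRing R]
    [AddCommGroup M] [Module R M] [AddCommGroup N] [Module R N]
    (f : MultilinearMap R (fun _ : ι => M) N) {S : Set M} (hS : Submodule.span R S = ⊤)
    (h : ∀ v : ι → M, (∀ i, v i ∈ S) → f v = 0) : f = 0 := by
  classical
  cases nonempty_fintype ι
  have key : ∀ (s : Finset ι) (v : ι → M), (∀ i ∉ s, v i ∈ S) → f v = 0 := by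
    intro s
    induction s using Finset.induction_on with
    | empty => exact fun v hv => h v fun i => hv i (Finset.notMem_empty i)
    | insert a s _ ih =>
      intro v hv
      have hupdate : ∀ x ∈ Submodule.span R S, f (Function.update v a x) = 0 := by
        intro x hx
        induction hx using Submodule.span_induction with
        | mem x hx =>
          refine ih _ fun i hi => ?_
          by_cases hia : i = a
          · subst hia
            simpa using hx
          · rw [Function.update_of_ne hia]
            exact hv i (by simp [hia, hi])
        | zero => exact f.map_update_zero v a
        | add x y _ _ hx hy => rw [f.map_update_add, hx, hy, add_zero]
        | smul r x _ hx => rw [f.map_update_smul, hx, smul_zero]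
      simpa using hupdate (v a) (hS ▸ Submodule.mem_top)
  ext v
  exact key Finset.univ v fun i hi => absurd (Finset.mem_univ i) hi

/-- Two elements of a ring commute up to sign. -/
def CommuteUpToSign {A : Type*} [Ring A] (a b : A) : Prop :=
  a * b = b * a ∨ a * b = -(b * a)

namespace CommuteUpToSign

variable {A : Type*} [Ring A] {a b : A}

theorem symm (h : CommuteUpToSign a b) : CommuteUpToSign b a :=
  h.imp Eq.symm fun h => by rw [h, neg_neg]

theorem list_prod_right {l : List A} (h : ∀ b ∈ l, CommuteUpToSign a b) :
    CommuteUpToSign a l.prod := by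
  induction l with
  | nil => exact Or.inl (by simp)
  | cons b l ih =>
    have hb := h b List.mem_cons_self
    have hl := ih fun c hc => h c (List.mem_cons_of_mem b hc)
    rw [List.prod_cons, CommuteUpToSign, ← mul_assoc]
    rcases hb with hb | hb <;> rcases hl with hl | hl <;>
      simp [hb, hl, mul_assoc]

theorem list_prod_list_prod {l l' : List A} (h : ∀ a ∈ l, ∀ b ∈ l', CommuteUpToSign a b) :
    CommuteUpToSign l.prod l'.prod :=
  list_prod_right fun b hb => (list_prod_right fun a ha => (h a ha b hb).symm).symm

theorem list_prod_eq_or_eq_neg {l l' : List A} (hperm : l.Perm l')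
    (h : ∀ a ∈ l, ∀ b ∈ l, CommuteUpToSign a b) : l.prod = l'.prod ∨ l.prod = -l'.prod := by
  induction hperm with
  | nil => exact Or.inl rfl
  | cons x _ ih =>
    simp only [List.prod_cons]
    refine (ih fun a ha b hb => h a (by simp [ha]) b (by simp [hb])).imp ?_ ?_ <;>
      intro e <;> simp [e]
  | swap x y l =>
    simp only [List.prod_cons, ← mul_assoc]
    refine (h y (by simp) x (by simp)).imp ?_ ?_ <;> intro e <;> simp [e]
  | trans hp _ ih₁ ih₂ =>
    have h₁ := ih₁ h
    have h₂ := ih₂ fun a ha b hb => h a (hp.mem_iff.mpr ha) b (hp.mem_iff.mpr hb)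
    rcases h₁ with h₁ | h₁ <;> rcases h₂ with h₂ | h₂ <;> simp [h₁, h₂]

end CommuteUpToSign

/-- If the words in the anticommuting units `h i` satisfy the standard identity of degree `N`, then
so do the words in any anticommuting family `g i`: both alternating sums are the same integer
multiple of a single product. -/
theorem standard_identity_words {I A B : Type*} [Ring A] [Ring B] [IsAddTorsionFree B]
    [Nontrivial B] {g : I → A} {h : I → B} (hg : Pairwise fun i j => g i * g j = -(g j * g i))
    (hh : Pairwise fun i j => h i * h j = -(h j * h i)) (hu : ∀ i, IsUnit (h i)) {N : ℕ}
    (hB : ∀ u : Fin N → B, ∑ σ : Equiv.Perm (Fin N),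
      (Equiv.Perm.sign σ : ℤ) • (List.ofFn fun i => u (σ i)).prod = 0)
    (w : Fin N → List I) :
    ∑ σ : Equiv.Perm (Fin N),
      (Equiv.Perm.sign σ : ℤ) • (List.ofFn fun i => ((w (σ i)).map g).prod).prod = 0 := by
  let p : I → A × B := fun i => (g i, h i)
  have hp : ∀ i j, CommuteUpToSign (p i) (p j) := by
    intro i j
    by_cases hij : i = j
    · exact Or.inl (by rw [hij])
    · exact Or.inr (Prod.ext (hg hij) (hh hij))
  let U : Fin N → A × B := fun i => ((w i).map p).prod
  have hU : ∀ a ∈ List.ofFn U, ∀ b ∈ List.ofFn U, CommuteUpToSign a b := by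
    simp only [List.mem_ofFn, forall_exists_index, forall_apply_eq_imp_iff, U]
    rintro i j
    refine CommuteUpToSign.list_prod_list_prod ?_
    simp only [List.mem_map]
    rintro _ ⟨a, _, rfl⟩ _ ⟨b, _, rfl⟩
    exact hp a b
  have hsign : ∀ σ : Equiv.Perm (Fin N), ∃ c : ℤ,
      (List.ofFn fun i => U (σ i)).prod = c • (List.ofFn U).prod := by
    intro σ
    have hperm : (List.ofFn fun i => U (σ i)).Perm (List.ofFn U) := σ.ofFn_comp_perm U
    rcases CommuteUpToSign.list_prod_eq_or_eq_neg hperm fun a ha b hb =>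
      hU a (hperm.mem_iff.mp ha) b (hperm.mem_iff.mp hb) with e | e
    · exact ⟨1, by rw [e, one_smul]⟩
    · exact ⟨-1, by rw [e, neg_one_smul]⟩
  choose c hc using hsign
  have hsum : ∑ σ : Equiv.Perm (Fin N),
      (Equiv.Perm.sign σ : ℤ) • (List.ofFn fun i => U (σ i)).prod =
      (∑ σ, (Equiv.Perm.sign σ : ℤ) * c σ) • (List.ofFn U).prod := by
    simp only [hc, Finset.sum_smul, mul_smul]
  have hfst : ∀ i, (U i).1 = ((w i).map g).prod := fun i => by
    simpa [p, Function.comp_def] using map_list_prod (RingHom.fst A B) ((w i).map p)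
  have hsnd : ∀ i, (U i).2 = ((w i).map h).prod := fun i => by
    simpa [p, Function.comp_def] using map_list_prod (RingHom.snd A B) ((w i).map p)
  have hunit : IsUnit (List.ofFn U).prod.2 := by
    change IsUnit (RingHom.snd A B (List.ofFn U).prod)
    rw [map_list_prod]
    refine List.prod_isUnit fun b hb => ?_
    simp only [List.map_ofFn, List.mem_ofFn, Function.comp_apply] at hb
    obtain ⟨i, rfl⟩ := hb
    rw [RingHom.coe_snd, hsnd]
    refine List.prod_isUnit fun b hb => ?_
    obtain ⟨j, _, rfl⟩ := List.mem_map.mp hb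
    exact hu j
  have hzero : ∑ σ, (Equiv.Perm.sign σ : ℤ) * c σ = 0 := by
    have hs := congrArg (RingHom.snd A B) hsum
    simp only [map_sum, map_zsmul, map_list_prod, List.map_ofFn, Function.comp_def] at hs
    rw [hB fun i => RingHom.snd A B (U i)] at hs
    have hs' : (∑ σ, (Equiv.Perm.sign σ : ℤ) * c σ) • (List.ofFn U).prod.2 = 0 := by
      rw [← RingHom.coe_snd, map_list_prod, List.map_ofFn]
      exact hs.symm
    exact (smul_eq_zero.mp hs').resolve_right hunit.ne_zero
  have hs := congrArg (RingHom.fst A B) hsum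
  simp only [map_sum, map_zsmul, map_list_prod, List.map_ofFn, Function.comp_def, hzero, zero_smul,
    map_zero, RingHom.coe_fst, hfst] at hs
  exact hs

/-- There are `2 * k + 1` pairwise anticommuting invertible rational matrices of size `2 ^ k`. -/
theorem exists_anticommuting_isUnit_matrix (k : ℕ) :
    ∃ (n : Type) (_ : Fintype n) (_ : DecidableEq n) (γ : Fin (2 * k + 1) → Matrix n n ℚ),
      Fintype.card n = 2 ^ k ∧ (∀ i, IsUnit (γ i)) ∧
        Pairwise fun i j => γ i * γ j = -(γ j * γ i) := by
  induction k with
  | zero =>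
    exact ⟨Unit, inferInstance, inferInstance, fun _ => 1, by simp, fun _ => isUnit_one,
      fun i j hij => absurd (Subsingleton.elim (α := Fin 1) i j) hij⟩
  | succ k ih =>
    obtain ⟨n, _, _, γ, hcard, hunit, hanti⟩ := ih
    let δ : Fin (2 * k + 1) → Matrix (n ⊕ n) (n ⊕ n) ℚ := fun i => Matrix.fromBlocks 0 (γ i) (γ i) 0
    let a : Matrix (n ⊕ n) (n ⊕ n) ℚ := Matrix.fromBlocks 0 1 (-1) 0
    let b : Matrix (n ⊕ n) (n ⊕ n) ℚ := Matrix.fromBlocks 1 0 0 (-1)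
    have hδ : ∀ i, IsUnit (δ i) := by
      intro i
      obtain ⟨x, hx⟩ := (hunit i).exists_right_inv
      refine IsUnit.of_mul_eq_one (Matrix.fromBlocks 0 x x 0) ?_
      simp [δ, Matrix.fromBlocks_multiply, hx]
    have ha : IsUnit a := IsUnit.of_mul_eq_one (-a) (by
      simp [a, Matrix.fromBlocks_multiply, Matrix.fromBlocks_neg])
    have hb : IsUnit b := IsUnit.of_mul_eq_one b (by simp [b, Matrix.fromBlocks_multiply])
    have hδδ : ∀ i j, i ≠ j → δ i * δ j = -(δ j * δ i) := fun i j hij => by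
      simp [δ, Matrix.fromBlocks_multiply, Matrix.fromBlocks_neg, hanti hij]
    have hab : a * b = -(b * a) := by
      simp [a, b, Matrix.fromBlocks_multiply, Matrix.fromBlocks_neg]
    have haδ : ∀ i, a * δ i = -(δ i * a) := fun i => by
      simp [a, δ, Matrix.fromBlocks_multiply, Matrix.fromBlocks_neg]
    have hbδ : ∀ i, b * δ i = -(δ i * b) := fun i => by
      simp [b, δ, Matrix.fromBlocks_multiply, Matrix.fromBlocks_neg]
    refine ⟨n ⊕ n, inferInstance, inferInstance,
      (Fin.cons a (Fin.cons b δ) : Fin (2 * k + 1 + 1 + 1) → _), ?_, ?_, ?_⟩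
    · rw [Fintype.card_sum, hcard, pow_succ, mul_two]
    · exact Fin.cases ha (Fin.cases hb hδ)
    · refine Fin.cases (Fin.cases (fun h => absurd rfl h)
          (Fin.cases (fun _ => hab) fun i _ => haδ i))
        (Fin.cases (Fin.cases (fun _ => (neg_eq_iff_eq_neg.mpr hab).symm)
            (Fin.cases (fun h => absurd rfl h) fun i _ => hbδ i))
          fun i => Fin.cases (fun _ => (neg_eq_iff_eq_neg.mpr (haδ i)).symm)
            (Fin.cases (fun _ => (neg_eq_iff_eq_neg.mpr (hbδ i)).symm) fun j hij => ?_))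
      exact hδδ i j fun h => hij (by rw [h])

/-- The words in the generators span the Clifford algebra of a quadratic form on `R^I`. -/
theorem CliffordAlgebra.span_words_eq_top {R I : Type*} [CommRing R] [Fintype I] [DecidableEq I]
    (Q : QuadraticForm R (I → R)) :
    Submodule.span R (Set.range fun w : List I =>
      (w.map fun i => ι Q (Pi.single i 1)).prod) = ⊤ := by
  let ξ : I → CliffordAlgebra Q := fun i => ι Q (Pi.single i 1)
  have hadjoin : Algebra.adjoin R (Set.range ξ) = ⊤ := by
    rw [← top_le_iff, ← adjoin_range_ι, Algebra.adjoin_le_iff]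
    rintro _ ⟨v, rfl⟩
    rw [pi_eq_sum_univ' v, map_sum]
    refine Subalgebra.sum_mem _ fun i _ => ?_
    rw [map_smul]
    exact Subalgebra.smul_mem _ (Algebra.subset_adjoin (Set.mem_range_self i)) _
  rw [← top_le_iff, ← Algebra.top_toSubmodule, ← hadjoin, Algebra.adjoin_eq_span]
  refine Submodule.span_mono fun x hx => ?_
  induction hx using Submonoid.closure_induction with
  | mem x hx =>
    obtain ⟨i, rfl⟩ := hx
    exact ⟨[i], by simp [ξ]⟩
  | one => exact ⟨[], by simp⟩
  | mul x y _ _ hx hy =>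
    obtain ⟨v, rfl⟩ := hx
    obtain ⟨w, rfl⟩ := hy
    exact ⟨v ++ w, by simp⟩

theorem ι_single_anticommute (n : ℕ) : Pairwise fun i j : Fin n =>
    CliffordAlgebra.ι (Qform n) (Pi.single i 1) * CliffordAlgebra.ι (Qform n) (Pi.single j 1) =
      -(CliffordAlgebra.ι (Qform n) (Pi.single j 1) *
        CliffordAlgebra.ι (Qform n) (Pi.single i 1)) := by
  intro i j hij
  refine CliffordAlgebra.ι_mul_ι_comm_of_isOrtho ?_
  rw [QuadraticMap.isOrtho_def]
  simp only [Qform, QuadraticMap.weightedSumSquares_apply, ← Finset.sum_add_distrib]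
  refine Finset.sum_congr rfl fun k _ => ?_
  by_cases hki : k = i
  · subst hki
    simp [hij]
  · simp [hki]

/-- The Clifford algebra `C` over `R = ℂ[x_1, …, x_n]` with generators `ξ_i` satisfying
`ξ_i ξ_j + ξ_j ξ_i = 2 δ_{ij} x_i` satisfies the standard polynomial identity of degree
`N = 2^{⌊n/2⌋ + 1}`:  `Σ_{σ ∈ S_N} sgn(σ) u_{σ(1)} ⋯ u_{σ(N)} = 0` for all
`u_1, …, u_N ∈ C`.  (The Amitsur–Levitzki identity for `U(𝔥)`, `𝔥` the Cartan
subalgebra of `Q(n)`.) -/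
theorem cliffordAlgebra_standard_identity (n : ℕ) (hn : 1 ≤ n)
    (u : Fin (2 ^ (n / 2 + 1)) → CliffordAlgebra (Qform n)) :
    ∑ σ : Equiv.Perm (Fin (2 ^ (n / 2 + 1))),
      (Equiv.Perm.sign σ : ℤ) • (List.ofFn (fun i => u (σ i))).prod = 0 := by
  obtain ⟨m, _, _, γ, hcard, hunit, hanti⟩ := exists_anticommuting_isUnit_matrix (n / 2)
  have hm : Nonempty m := Fintype.card_pos_iff.mp (hcard ▸ by positivity)
  have : IsAddTorsionFree (Matrix m m ℚ) := IsAddTorsionFree.of_module_rat _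
  have hle : n ≤ 2 * (n / 2) + 1 := by omega
  let S := ((MultilinearMap.mkPiAlgebraFin (MvPolynomial (Fin n) ℂ) (2 ^ (n / 2 + 1))
    (CliffordAlgebra (Qform n))).alternatization).toMultilinearMap
  have hS : ∀ v, S v = ∑ σ : Equiv.Perm (Fin (2 ^ (n / 2 + 1))),
      (Equiv.Perm.sign σ : ℤ) • (List.ofFn (fun i => v (σ i))).prod := fun v =>
    (MultilinearMap.alternatization_apply _ v).trans (by simp [Units.smul_def])
  have hzero : S = 0 := by
    refine S.eq_zero_of_span_eq_top (CliffordAlgebra.span_words_eq_top (Qform n)) fun v hv => ?_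
    choose w hw using hv
    obtain rfl : (fun i => ((w i).map fun j =>
      CliffordAlgebra.ι (Qform n) (Pi.single j 1)).prod) = v := funext hw
    rw [hS]
    refine standard_identity_words (B := Matrix m m ℚ) (h := fun i => γ (Fin.castLE hle i))
      (ι_single_anticommute n) (fun i j hij => hanti fun h => hij (Fin.castLE_injective hle h))
      (fun i => hunit _) (fun x => Matrix.amitsur_levitzki ?_ x) w
    rw [hcard, pow_succ, mul_comm]
  rw [← hS, hzero, zero_apply]
end

section
/- Let A be an associative unital ℂ-algebra satisfying the standard polynomial identity of degree 2m for some integer m ≥ 1, and let M be a simple left A-module such that every A-module endomorphism of M is multiplication by a complex scalar. Then M is finite-dimensional over ℂ and dim_ℂ M ≤ m. (This is the density-theorem argument underlying the bound on dimensions of irreducible representations of algebras satisfying the Amitsur–Levitzki identity.) -/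
/-- A product of matrix units `u i`, sending `v (b i)` to `v (a i)` and every other `v j` to `0`,
either kills `v j`, or consecutive factors have matching indices. -/
theorem List.prod_map_smul_eq_zero_or_isChain {ι A M : Type*} [Ring A] [AddCommGroup M] [Module A M]
    {v : ℕ → M} {u : ι → A} {a b : ι → ℕ}
    (hu : ∀ i j, u i • v j = if j = b i then v (a i) else 0) (j : ℕ) (l : List ι) :
    (l.map u).prod • v j = 0 ∨ (l.IsChain fun x y => a y = b x) ∧
      ∃ k, (l.map u).prod • v j = v k ∧ ∀ x ∈ l.head?, a x = k := by
  induction l with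
  | nil => exact Or.inr ⟨List.isChain_nil, j, by simp, by simp⟩
  | cons x l ih =>
    rw [List.map_cons, List.prod_cons, mul_smul]
    rcases ih with h | ⟨hl, k, hk, hhead⟩
    · exact Or.inl (by rw [h, smul_zero])
    · rw [hk, hu]
      split_ifs with hkb
      · refine Or.inr ⟨List.isChain_cons.2 ⟨fun y hy => (hhead y hy).trans hkb, hl⟩, a x, rfl, ?_⟩
        simp
      · exact Or.inl rfl

/-- The staircase product `E₀₁ E₁₁ E₁₂ E₂₂ ⋯` of the first `n` factors. -/
theorem staircase_prod_smul {A M : Type*} [Ring A] [AddCommGroup M] [Module A M]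
    {v : ℕ → M} {u : ℕ → A} {n : ℕ}
    (hu : ∀ k < n, u k • v (k / 2 + 1) = v ((k + 1) / 2)) :
    ((List.range n).map u).prod • v ((n + 1) / 2) = v 0 := by
  induction n with
  | zero => simp
  | succ n ih =>
    have hn : (n + 1 + 1) / 2 = n / 2 + 1 := by omega
    rw [List.range_succ, List.map_append, List.prod_append, mul_smul, hn]
    simp only [List.map_cons, List.map_nil, List.prod_cons, List.prod_nil, mul_one]
    rw [hu n n.lt_succ_self, ih fun k hk => hu k (hk.trans n.lt_succ_self)]

/-- If the standard polynomial of degree `n` vanishes on the staircase matrix units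
`E₀₁, E₁₁, E₁₂, E₂₂, …`, then `v 0 = 0`. -/
theorem eq_zero_of_standard_identity_staircase {A M : Type*} [Ring A] [AddCommGroup M] [Module A M]
    {n : ℕ} {v : ℕ → M} {u : Fin n → A}
    (hu : ∀ (i : Fin n) (j : ℕ),
      u i • v j = if j = (i : ℕ) / 2 + 1 then v (((i : ℕ) + 1) / 2) else 0)
    (hA : ∑ σ : Equiv.Perm (Fin n),
      (Equiv.Perm.sign σ : ℤ) • (List.ofFn (fun i => u (σ i))).prod = 0) :
    v 0 = 0 := by
  have hsum := congrArg (· • v ((n + 1) / 2)) hA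
  simp only [Finset.sum_smul, zero_smul] at hsum
  rw [Finset.sum_eq_single 1] at hsum
  · have hlist : List.ofFn u =
        (List.range n).map fun k => if h : k < n then u ⟨k, h⟩ else 0 := by
      apply List.ext_getElem <;> simp +contextual
    simp only [Equiv.Perm.sign_one, Units.val_one, one_smul, Equiv.Perm.one_apply] at hsum
    rw [← hsum, hlist, staircase_prod_smul]
    intro k hk
    simp [hk, hu]
  · intro σ _ hσ
    rw [smul_assoc]
    have hmap : List.ofFn (fun i => u (σ i)) = (List.ofFn σ).map u := by
      rw [List.map_ofFn]; rfl
    rw [hmap]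
    rcases List.prod_map_smul_eq_zero_or_isChain (a := fun i : Fin n => ((i : ℕ) + 1) / 2)
      (b := fun i : Fin n => (i : ℕ) / 2 + 1) hu ((n + 1) / 2) (List.ofFn σ) with h | ⟨h, -⟩
    · rw [h, smul_zero]
    · refine absurd ?_ hσ
      have hle : (List.ofFn σ).IsChain (· ≤ ·) :=
        h.imp fun x y hxy => by rw [Fin.le_def]; omega
      have hmono : Monotone σ := by
        rw [← List.sortedLE_ofFn_iff]
        exact hle.sortedLE
      have hiso : (hmono.strictMono_of_injective σ.injective).orderIsoOfSurjective σ σ.surjective =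
          OrderIso.refl (Fin n) := Subsingleton.elim _ _
      exact Equiv.ext fun i => DFunLike.congr_fun hiso i
  · simp

/-- **Density theorem** for a simple module whose endomorphisms are scalars: linearly independent
families can be mapped arbitrarily. -/
theorem exists_smul_eq_of_linearIndependent {K A M ι : Type*} [Field K] [Ring A]
    [AddCommGroup M] [Module K M] [Module A M] [IsSimpleModule A M] [Finite ι]
    (hEnd : ∀ f : M →ₗ[A] M, ∃ c : K, ∀ x : M, f x = c • x)
    {v : ι → M} (hv : LinearIndependent K v) (w : ι → M) :
    ∃ r : A, ∀ i, r • v i = w i := by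
  classical
  cases nonempty_fintype ι
  obtain ⟨g, hg⟩ := LinearMap.exists_extend ((Module.Basis.span hv).constr K w)
  have hgv (i : ι) : g (v i) = w i := by
    have h := LinearMap.congr_fun hg (Module.Basis.span hv i)
    rwa [Module.Basis.constr_basis, LinearMap.comp_apply, Submodule.subtype_apply,
      Module.Basis.span_apply] at h
  let f : Module.End (Module.End A M) M :=
    { toFun := g
      map_add' := g.map_add
      map_smul' := fun e x => by
        obtain ⟨c, hc⟩ := hEnd e
        simp [Module.End.smul_def, hc] }
  obtain ⟨r, hr⟩ := jacobson_density (R := A) f (Finset.univ.image v)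
  exact ⟨r, fun i => by rw [← hgv]; exact (hr (v i) (by simp)).symm⟩

/-- If `A` is an associative unital `ℂ`-algebra satisfying the standard polynomial
identity of degree `2m` (`m ≥ 1`), and `M` is a simple left `A`-module all of whose
`A`-module endomorphisms are multiplication by complex scalars, then `M` is
finite-dimensional over `ℂ` of dimension at most `m`. -/
theorem simpleModule_finiteDimensional_of_standard_identity
    (A : Type*) [Ring A] [Algebra ℂ A] (m : ℕ) (hm : 1 ≤ m)
    (hA : ∀ u : Fin (2 * m) → A,
      ∑ σ : Equiv.Perm (Fin (2 * m)),
        (Equiv.Perm.sign σ : ℤ) • (List.ofFn (fun i => u (σ i))).prod = 0)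
    (M : Type*) [AddCommGroup M] [Module ℂ M] [Module A M] [IsScalarTower ℂ A M]
    [IsSimpleModule A M]
    (hEnd : ∀ f : M →ₗ[A] M, ∃ c : ℂ, ∀ x : M, f x = c • x) :
    FiniteDimensional ℂ M ∧ Module.finrank ℂ M ≤ m := by
  suffices hrank : Module.rank ℂ M ≤ m from
    ⟨Module.rank_lt_aleph0_iff.1 (hrank.trans_lt Cardinal.natCast_lt_aleph0),
      Module.finrank_le_of_rank_le hrank⟩
  refine rank_le fun s hs => ?_
  by_contra! hcard
  have hcard' : Fintype.card (Fin (m + 1)) ≤ Fintype.card s := by simpa using hcard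
  obtain ⟨e⟩ := Function.Embedding.nonempty_of_card_le hcard'
  have hw : LinearIndependent ℂ fun i => (e i : M) := hs.comp e e.injective
  let v : ℕ → M := fun j => if h : j < m + 1 then e ⟨j, h⟩ else 0
  have hu (i : Fin (2 * m)) : ∃ r : A, ∀ j : ℕ,
      r • v j = if j = (i : ℕ) / 2 + 1 then v (((i : ℕ) + 1) / 2) else 0 := by
    obtain ⟨r, hr⟩ := exists_smul_eq_of_linearIndependent hEnd hw fun j =>
      if (j : ℕ) = (i : ℕ) / 2 + 1 then v (((i : ℕ) + 1) / 2) else 0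
    refine ⟨r, fun j => ?_⟩
    by_cases hj : j < m + 1
    · have hvj : v j = e ⟨j, hj⟩ := dif_pos hj
      rw [hvj]
      exact hr ⟨j, hj⟩
    · have hvj : v j = 0 := dif_neg hj
      rw [if_neg (by omega), hvj, smul_zero]
  choose u hu using hu
  have hv : v 0 = 0 := eq_zero_of_standard_identity_staircase hu (hA u)
  exact hw.ne_zero 0 (by simpa [v] using hv)
end

section
/- In the Clifford algebra C (case n = 2), let 𝒜 be the unital ℂ-subalgebra generated by the four elements z_0 = 2x_1 + 2x_2, φ_0 = ξ_1 + ξ_2, φ_1 = x_2·ξ_1 − x_1·ξ_2, and z_1 = x_1x_2 − ξ_1ξ_2. Then the set of polynomials p ∈ ℂ[x_1, x_2] whose image in C lies in 𝒜 is exactly ℂ ⊕ z_0·ℂ[z_0, x_1x_2], i.e. the ℂ-span of the constants together with all elements of the form (x_1 + x_2)·q(x_1 + x_2, x_1x_2) with q a polynomial in two variables. Equivalently, it consists of all symmetric polynomials p in x_1, x_2 such that ∂p/∂x_1 − ∂p/∂x_2 is divisible by x_1 + x_2. (This is the case n = 2 of the identification of the even polynomial part of the image of the Harish-Chandra homomorphism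 of the principal finite W-algebra of Q(n) with the image of the center of U(Q(n)).) -/
open MvPolynomial

/-- `R = ℂ[x_1, x_2]`. -/
noncomputable abbrev Rpoly : Type := MvPolynomial (Fin 2) ℂ

/-- The quadratic form `Q(v) = x_1 v_1² + x_2 v_2²` on `R²`. -/
noncomputable def Q2 : QuadraticForm Rpoly (Fin 2 → Rpoly) :=
  QuadraticMap.weightedSumSquares Rpoly (fun i => (X i : Rpoly))

/-- The generators `ξ_1, ξ_2` of the Clifford algebra `C`, satisfying
`ξ_i ξ_j + ξ_j ξ_i = 2 δ_{ij} x_i`. -/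
noncomputable def ξ (i : Fin 2) : CliffordAlgebra Q2 :=
  CliffordAlgebra.ι Q2 (Pi.single i 1)

/-- `z_0 = 2x_1 + 2x_2`. -/
noncomputable def z₀ : CliffordAlgebra Q2 :=
  algebraMap Rpoly _ (2 * X 0 + 2 * X 1)

/-- `φ_0 = ξ_1 + ξ_2`. -/
noncomputable def φ₀ : CliffordAlgebra Q2 := ξ 0 + ξ 1

/-- `φ_1 = x_2 ξ_1 - x_1 ξ_2`. -/
noncomputable def φ₁ : CliffordAlgebra Q2 :=
  algebraMap Rpoly _ (X 1) * ξ 0 - algebraMap Rpoly _ (X 0) * ξ 1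

/-- `z_1 = x_1 x_2 - ξ_1 ξ_2`. -/
noncomputable def z₁ : CliffordAlgebra Q2 :=
  algebraMap Rpoly _ (X 0 * X 1) - ξ 0 * ξ 1

lemma Polynomial.eq_C_of_forall_eval_add_one (r : Polynomial ℂ)
    (h : ∀ u, r.eval (u + 1) = r.eval u) : r = Polynomial.C (r.eval 0) := by
  refine Polynomial.eq_of_infinite_eval_eq _ _ ?_
  refine (Set.infinite_range_of_injective (Nat.cast_injective (R := ℂ))).mono ?_
  rintro _ ⟨n, rfl⟩
  induction n with
  | zero => simp
  | succ n ih => simp only [Set.mem_ofPred_eq, Nat.cast_succ, h] at ih ⊢; simpa using ih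

namespace SergeevClifford

/-- The restriction of a polynomial to the antidiagonal line `x_1 + x_2 = 0`. -/
noncomputable def restr : Rpoly →ₐ[ℂ] Polynomial ℂ :=
  aeval ![Polynomial.X, -Polynomial.X]

lemma eval_restr (p : Rpoly) (u : ℂ) :
    (restr p).eval u = eval ![u, -u] p := by
  induction p using MvPolynomial.induction_on with
  | C a => simp [restr]
  | add p q hp hq => simp [hp, hq]
  | mul_X p i hp =>
    rw [map_mul, Polynomial.eval_mul, hp, map_mul, eval_X]
    fin_cases i <;> simp [restr]

lemma dvd_sub_aeval_restr (p : Rpoly) :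
    (X 0 + X 1 : Rpoly) ∣ p - Polynomial.aeval (X 0 : Rpoly) (restr p) := by
  induction p using MvPolynomial.induction_on with
  | C a => simp [restr, MvPolynomial.algebraMap_eq]
  | add p q hp hq => simpa [add_sub_add_comm] using dvd_add hp hq
  | mul_X p i hp =>
    obtain ⟨q, hq⟩ := hp
    fin_cases i
    · exact ⟨q * X 0, by simp [restr] at hq ⊢; linear_combination X 0 * hq⟩
    · exact ⟨p - q * X 0, by simp [restr] at hq ⊢; linear_combination -X 0 * hq⟩

lemma dvd_iff_restr_eq_zero (p : Rpoly) :
    (X 0 + X 1 : Rpoly) ∣ p ↔ restr p = 0 := by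
  constructor
  · rintro ⟨q, rfl⟩
    simp [restr]
  · intro h
    simpa [h] using dvd_sub_aeval_restr p

lemma derivative_restr (p : Rpoly) :
    Polynomial.derivative (restr p) = restr (pderiv 0 p - pderiv 1 p) := by
  induction p using MvPolynomial.induction_on with
  | C a => simp [restr]
  | add p q hp hq => simp only [map_add, hp, hq, map_sub]; ring
  | mul_X p i hp =>
    rw [map_mul, Polynomial.derivative_mul, hp]
    fin_cases i <;>
      simp [restr, Derivation.leibniz, pderiv_X] <;> ring

lemma dvd_pderiv_sub_iff (p : Rpoly) :
    (X 0 + X 1 : Rpoly) ∣ (pderiv 0 p - pderiv 1 p) ↔ ∃ c, restr p = Polynomial.C c := by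
  rw [dvd_iff_restr_eq_zero, ← derivative_restr]
  constructor
  · intro h
    exact ⟨_, Polynomial.eq_C_of_derivative_eq_zero h⟩
  · rintro ⟨c, hc⟩
    simp [hc]

/-! ### The two-dimensional representations -/

/-- Over the point `(a², b²)` the Clifford algebra acts on `ℂ²`, with `ξ_1`, `ξ_2` acting by
multiples of two anticommuting involutions. -/
theorem exists_rep (a b : ℂ) : ∃ ρ : CliffordAlgebra Q2 →+* Matrix (Fin 2) (Fin 2) ℂ,
    (∀ p : Rpoly, ρ (algebraMap Rpoly _ p) = Matrix.scalar _ (eval ![a ^ 2, b ^ 2] p)) ∧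
    ρ (ξ 0) = !![0, a; a, 0] ∧ ρ (ξ 1) = !![b, 0; 0, -b] := by
  let _ : Algebra Rpoly (Matrix (Fin 2) (Fin 2) ℂ) :=
    ((Matrix.scalar (Fin 2)).comp (eval ![a ^ 2, b ^ 2])).toAlgebra' fun c x =>
      (Matrix.scalar_commute _ (Commute.all _) x).eq
  have hmap (p : Rpoly) : algebraMap Rpoly (Matrix (Fin 2) (Fin 2) ℂ) p =
    Matrix.scalar _ (eval ![a ^ 2, b ^ 2] p) := rfl
  let f : (Fin 2 → Rpoly) →ₗ[Rpoly] Matrix (Fin 2) (Fin 2) ℂ :=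
    Fintype.linearCombination Rpoly ![!![0, a; a, 0], !![b, 0; 0, -b]]
  have hf (m) : f m * f m = algebraMap Rpoly _ (Q2 m) := by
    simp only [f, Fintype.linearCombination_apply, Fin.sum_univ_two, Algebra.smul_def, hmap, Q2,
      QuadraticMap.weightedSumSquares_apply]
    ext i j
    fin_cases i <;> fin_cases j <;> simp [Matrix.mul_apply, Fin.sum_univ_two] <;> ring
  refine ⟨(CliffordAlgebra.lift Q2 ⟨f, hf⟩ : _ →ₐ[Rpoly] _), fun p => ?_, ?_, ?_⟩
  · exact AlgHom.commutes _ p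
  · simp [ξ, f]
  · simp [ξ, f]

lemma algebraMap_complex (c : ℂ) :
    algebraMap ℂ (CliffordAlgebra Q2) c = algebraMap Rpoly _ (C c) := by
  rw [IsScalarTower.algebraMap_apply ℂ Rpoly (CliffordAlgebra Q2), MvPolynomial.algebraMap_eq]

/-- The subalgebra `𝒜`. -/
noncomputable abbrev A : Subalgebra ℂ (CliffordAlgebra Q2) := Algebra.adjoin ℂ {z₀, φ₀, φ₁, z₁}

/-- The representations over `(a², b²)` and `(b², a²)` are intertwined on `𝒜`. -/
lemma eval_eq_eval_swap (p : Rpoly) (hp : algebraMap Rpoly _ p ∈ A) (a b : ℂ) :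
    eval ![a ^ 2, b ^ 2] p = eval ![b ^ 2, a ^ 2] p := by
  obtain ⟨ρ, hρ, hρ0, hρ1⟩ := exists_rep a b
  obtain ⟨σ, hσ, hσ0, hσ1⟩ := exists_rep b a
  let M : Matrix (Fin 2) (Fin 2) ℂ := !![a + b, a - b; b - a, a + b]
  have key (x) (hx : x ∈ A) : M * ρ x = σ x * M := by
    induction hx using Algebra.adjoin_induction with
    | mem x hx =>
      rcases hx with rfl | rfl | rfl | rfl <;>
      · simp only [z₀, φ₀, φ₁, z₁, map_add, map_sub, map_mul, hρ, hσ, hρ0, hρ1, hσ0, hσ1]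
        ext i j
        fin_cases i <;> fin_cases j <;>
          simp [M, Matrix.mul_apply, Fin.sum_univ_two] <;> ring
    | algebraMap c =>
      rw [algebraMap_complex, hρ, hσ]
      simpa using (Matrix.scalar_commute c (Commute.all _) M).eq.symm
    | add x y _ _ hx hy => simp [mul_add, add_mul, hx, hy]
    | mul x y _ _ hx hy => rw [map_mul, map_mul, ← mul_assoc, hx, mul_assoc, hy, mul_assoc]
  have h := key _ hp
  rw [hρ, hσ] at h
  have h0 := congr_fun₂ h 0 0
  simp only [M, Matrix.mul_apply, Fin.sum_univ_two] at h0
  by_cases hab : a + b = 0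
  · have : b = -a := by linear_combination hab
    simp [this]
  · refine mul_left_cancel₀ hab ?_
    simpa [mul_comm] using h0

/-- On the antidiagonal, quotient and sub characters of `𝒜` at neighbouring points agree. -/
lemma eval_restr_add_one (p : Rpoly) (hp : algebraMap Rpoly _ p ∈ A) (u : ℂ) :
    (restr p).eval (u + 1) = (restr p).eval u := by
  obtain ⟨a, ha⟩ := IsAlgClosed.exists_pow_nat_eq u (n := 2) (by norm_num)
  obtain ⟨b, hb⟩ := IsAlgClosed.exists_pow_nat_eq (u + 1) (n := 2) (by norm_num)
  obtain ⟨ρ, hρ, hρ0, hρ1⟩ := exists_rep a (Complex.I * a)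
  obtain ⟨σ, hσ, hσ0, hσ1⟩ := exists_rep b (Complex.I * b)
  simp only [mul_pow, Complex.I_sq, ha, hb, neg_one_mul] at hρ hσ
  let v : Fin 2 → ℂ := ![1, -Complex.I]
  have hI : Complex.I * Complex.I = -1 := Complex.I_mul_I
  have key (x) (hx : x ∈ A) :
      ∃ c : ℂ, Matrix.mulVec (σ x) v = c • v ∧ Matrix.vecMul v (ρ x) = c • v := by
    induction hx using Algebra.adjoin_induction with
    | mem x hx =>
      rcases hx with rfl | rfl | rfl | rfl
      · refine ⟨0, ?_, ?_⟩ <;>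
        · simp only [z₀, hρ, hσ]
          ext i
          fin_cases i <;> simp [v] <;> ring
      · refine ⟨0, ?_, ?_⟩ <;>
        · simp only [φ₀, map_add, hρ0, hρ1, hσ0, hσ1]
          ext i
          fin_cases i <;> simp [v, Matrix.mulVec, Matrix.vecMul, dotProduct] <;> grind
      · refine ⟨0, ?_, ?_⟩ <;>
        · simp only [φ₁, map_sub, map_mul, hρ, hσ, hρ0, hρ1, hσ0, hσ1]
          ext i
          fin_cases i <;> simp [v, Matrix.mulVec, Matrix.vecMul, dotProduct] <;> grind
      · refine ⟨-u ^ 2 - u, ?_, ?_⟩ <;>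
        · simp only [z₁, map_sub, map_mul, hρ, hσ, hρ0, hρ1, hσ0, hσ1]
          ext i
          fin_cases i <;> simp [v, Matrix.mulVec, Matrix.vecMul, dotProduct] <;> grind
    | algebraMap c =>
      refine ⟨c, ?_⟩
      rw [algebraMap_complex, hρ, hσ]
      simp
    | add x y _ _ hx hy =>
      obtain ⟨c, hc, hc'⟩ := hx
      obtain ⟨d, hd, hd'⟩ := hy
      exact ⟨c + d, by simp [Matrix.add_mulVec, hc, hd, add_smul],
        by simp [Matrix.vecMul_add, hc', hd', add_smul]⟩
    | mul x y _ _ hx hy =>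
      obtain ⟨c, hc, hc'⟩ := hx
      obtain ⟨d, hd, hd'⟩ := hy
      exact ⟨c * d, by simp [← Matrix.mulVec_mulVec, hc, hd, Matrix.mulVec_smul, smul_smul,
        mul_comm],
        by simp [← Matrix.vecMul_vecMul, hc', hd', Matrix.smul_vecMul, smul_smul]⟩
  obtain ⟨c, hc, hc'⟩ := key _ hp
  rw [hσ] at hc
  rw [hρ] at hc'
  have h := congr_fun hc 0
  have h' := congr_fun hc' 0
  simp only [Matrix.scalar_apply, Matrix.mulVec_diagonal, Matrix.vecMul_diagonal, v, Pi.smul_apply,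
    Matrix.cons_val_zero, one_mul, mul_one, smul_eq_mul] at h h'
  rw [eval_restr, eval_restr, h, h']

lemma rename_swap_eq (p : Rpoly) (hp : algebraMap Rpoly _ p ∈ A) :
    rename (Equiv.swap (0 : Fin 2) 1) p = p := by
  refine MvPolynomial.funext fun x => ?_
  obtain ⟨a, ha⟩ := IsAlgClosed.exists_pow_nat_eq (x 0) (n := 2) (by norm_num)
  obtain ⟨b, hb⟩ := IsAlgClosed.exists_pow_nat_eq (x 1) (n := 2) (by norm_num)
  have h := eval_eq_eval_swap p hp a b
  rw [ha, hb] at h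
  rw [eval_rename]
  convert h.symm using 2
  · congr 1; ext i; fin_cases i <;> simp
  · congr 1; ext i; fin_cases i <;> simp

/-! ### Constructing elements of `𝒜` -/

lemma ξ_sq (i : Fin 2) : ξ i * ξ i = algebraMap Rpoly _ (X i) := by
  rw [ξ, CliffordAlgebra.ι_sq_scalar]
  simp [Q2, QuadraticMap.weightedSumSquares_apply, Pi.single_apply]

lemma ξ_anticomm : ξ 1 * ξ 0 = -(ξ 0 * ξ 1) := by
  rw [eq_neg_iff_add_eq_zero, ξ, ξ, CliffordAlgebra.ι_mul_ι_add_swap,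
    ← map_zero (algebraMap Rpoly (CliffordAlgebra Q2))]
  congr 1
  simp [QuadraticMap.polar, Q2, QuadraticMap.weightedSumSquares_apply, Pi.single_apply]


/-- `w = ξ_1 ξ_2` squares to `-x_1 x_2`. -/
lemma ξ_mul_ξ_sq : ξ 0 * ξ 1 * (ξ 0 * ξ 1) = -algebraMap Rpoly _ (X 0 * X 1) := by
  calc ξ 0 * ξ 1 * (ξ 0 * ξ 1) = ξ 0 * (ξ 1 * ξ 0) * ξ 1 := by simp only [mul_assoc]
    _ = -((ξ 0 * ξ 0) * (ξ 1 * ξ 1)) := by rw [ξ_anticomm]; noncomm_ring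
    _ = _ := by rw [ξ_sq, ξ_sq, map_mul]

lemma φ₀_sq : φ₀ * φ₀ = algebraMap Rpoly _ (X 0 + X 1) := by
  rw [map_add, ← ξ_sq, ← ξ_sq, φ₀, mul_add, add_mul, add_mul, ξ_anticomm]
  abel

lemma φ₁_eq : φ₁ = ξ 0 * ξ 1 * φ₀ := by
  have h : ξ 0 * ξ 1 * ξ 0 = -(ξ 0 * ξ 0 * ξ 1) := by
    rw [mul_assoc, ξ_anticomm, mul_neg, mul_assoc]
  rw [φ₀, mul_add, h, mul_assoc _ (ξ 1) (ξ 1), ξ_sq, ξ_sq, φ₁,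
    Algebra.commutes (X 1 : Rpoly) (ξ 0)]
  abel

lemma φ₁_mul_φ₀ : φ₁ * φ₀ = algebraMap Rpoly _ (X 0 + X 1) * (ξ 0 * ξ 1) := by
  rw [φ₁_eq, mul_assoc, φ₀_sq, Algebra.commutes]

lemma φ₀_mem : φ₀ ∈ A := Algebra.subset_adjoin (by simp)
lemma φ₁_mem : φ₁ ∈ A := Algebra.subset_adjoin (by simp)
lemma z₁_mem : z₁ ∈ A := Algebra.subset_adjoin (by simp)

lemma algebraMap_X_add_X_mem : algebraMap Rpoly (CliffordAlgebra Q2) (X 0 + X 1) ∈ A :=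
  φ₀_sq ▸ mul_mem φ₀_mem φ₀_mem

/-- `𝒜` contains `(x_1 + x_2) q` and `(x_1 + x_2) q ξ_1 ξ_2` for `q` a polynomial in the elementary
symmetric polynomials. -/
lemma mul_aeval_mem (g : Rpoly) :
    algebraMap Rpoly _ ((X 0 + X 1) * aeval ![X 0 + X 1, X 0 * X 1] g) ∈ A ∧
    algebraMap Rpoly _ ((X 0 + X 1) * aeval ![X 0 + X 1, X 0 * X 1] g) * (ξ 0 * ξ 1) ∈ A := by
  induction g using MvPolynomial.induction_on with
  | C c =>
    have hw : algebraMap Rpoly (CliffordAlgebra Q2) (X 0 + X 1) * (ξ 0 * ξ 1) ∈ A :=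
      φ₁_mul_φ₀ ▸ mul_mem φ₁_mem φ₀_mem
    have hc : algebraMap Rpoly (CliffordAlgebra Q2) (C c) ∈ A :=
      algebraMap_complex c ▸ Subalgebra.algebraMap_mem A c
    rw [algHom_C, MvPolynomial.algebraMap_eq, mul_comm, map_mul, mul_assoc]
    exact ⟨mul_mem hc algebraMap_X_add_X_mem, mul_mem hc hw⟩
  | add p q hp hq =>
    rw [map_add (aeval _), mul_add, map_add (algebraMap _ _), add_mul _ _ (ξ 0 * ξ 1)]
    exact ⟨add_mem hp.1 hq.1, add_mem hp.2 hq.2⟩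
  | mul_X p i hp =>
    rw [map_mul (aeval _), aeval_X, ← mul_assoc]
    generalize (X 0 + X 1 : Rpoly) * aeval ![X 0 + X 1, X 0 * X 1] p = q at hp ⊢
    obtain ⟨hq, hqw⟩ := hp
    fin_cases i
    · refine ⟨?_, ?_⟩
      · simpa using mul_mem hq algebraMap_X_add_X_mem
      · simpa [mul_comm q, mul_assoc] using mul_mem algebraMap_X_add_X_mem hqw
    · have ht : algebraMap Rpoly (CliffordAlgebra Q2) (q * (X 0 * X 1)) ∈ A := by
        have h := add_mem (mul_mem hq z₁_mem) hqw
        rwa [z₁, mul_sub, sub_add_cancel, ← map_mul] at h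
      refine ⟨ht, ?_⟩
      have h := sub_mem (mul_mem hqw z₁_mem) ht
      rwa [z₁, mul_sub, mul_assoc _ (ξ 0 * ξ 1) (ξ 0 * ξ 1), ξ_mul_ξ_sq, mul_neg, sub_neg_eq_add,
        ← map_mul, add_sub_cancel_right, mul_assoc, ← Algebra.commutes, ← mul_assoc,
        ← map_mul] at h

lemma exists_aeval_eq_of_rename_swap_eq (q : Rpoly)
    (hq : rename (Equiv.swap (0 : Fin 2) 1) q = q) :
    ∃ g : Rpoly, aeval ![X 0 + X 1, X 0 * X 1] g = q := by
  have hsymm : q.IsSymmetric := fun e => by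
    have he : e = 1 ∨ e = Equiv.swap 0 1 := by decide +revert
    rcases he with rfl | rfl
    · simp
    · exact hq
  obtain ⟨g, hg⟩ := esymmAlgHom_surjective (R := ℂ) (σ := Fin 2) (n := 2) (by simp) ⟨q, hsymm⟩
  refine ⟨g, ?_⟩
  have h : _ = q := congr_arg Subtype.val hg
  rw [esymmAlgHom_apply] at h
  rw [← h]
  congr 2
  ext1 i
  fin_cases i
  · simp
  · rw [esymm_eq_multiset_esymm]
    exact (Multiset.esymm_pair_two (X 0 : Rpoly) (X 1)).symm

lemma algebraMap_mem_of_restr_eq (p : Rpoly) (hp : rename (Equiv.swap (0 : Fin 2) 1) p = p)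
    (c : ℂ) (hc : restr p = Polynomial.C c) : algebraMap Rpoly _ p ∈ A := by
  obtain ⟨q, hq⟩ := (dvd_iff_restr_eq_zero (p - C c)).2 (by
    rw [map_sub, hc, algHom_C, Polynomial.algebraMap_eq, sub_self])
  have hne : (X 0 + X 1 : Rpoly) ≠ 0 := fun h => by
    simpa using congr_arg (eval ![1, 0]) h
  have hsq : rename (Equiv.swap (0 : Fin 2) 1) q = q := by
    refine mul_left_cancel₀ hne ?_
    have h := congr_arg (rename (Equiv.swap (0 : Fin 2) 1)) hq
    rw [map_sub, hp, rename_C, hq] at h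
    simp only [map_mul, map_add, rename_X, Equiv.swap_apply_left,
      Equiv.swap_apply_right] at h
    rw [h, add_comm]
  obtain ⟨g, rfl⟩ := exists_aeval_eq_of_rename_swap_eq q hsq
  rw [sub_eq_iff_eq_add] at hq
  rw [hq, map_add, ← algebraMap_complex]
  exact add_mem (mul_aeval_mem g).1 (Subalgebra.algebraMap_mem A c)

end SergeevClifford

/-- Let `𝒜` be the unital `ℂ`-subalgebra of the Clifford algebra `C` generated by
`z_0, φ_0, φ_1, z_1`.  A polynomial `p ∈ ℂ[x_1, x_2]` has image in `𝒜` if and only if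
`p` is symmetric and `∂p/∂x_1 − ∂p/∂x_2` is divisible by `x_1 + x_2`
(equivalently, `p ∈ ℂ ⊕ z_0·ℂ[z_0, x_1x_2]`). -/
theorem polynomial_mem_adjoin_iff (p : Rpoly) :
    algebraMap Rpoly (CliffordAlgebra Q2) p ∈
        Algebra.adjoin ℂ ({z₀, φ₀, φ₁, z₁} : Set (CliffordAlgebra Q2)) ↔
      (rename (Equiv.swap (0 : Fin 2) 1) p = p ∧
        (X 0 + X 1 : Rpoly) ∣ (pderiv 0 p - pderiv 1 p)) := by
  rw [SergeevClifford.dvd_pderiv_sub_iff]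
  constructor
  · intro hp
    exact ⟨SergeevClifford.rename_swap_eq p hp, _, Polynomial.eq_C_of_forall_eval_add_one _
      (SergeevClifford.eval_restr_add_one p hp)⟩
  · rintro ⟨hsymm, c, hc⟩
    exact SergeevClifford.algebraMap_mem_of_restr_eq p hsymm c hc
end
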